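/- Let n = p^ℓ m with p prime and ℓ ≥ 1, m ≥ 2 integers. A connected non-complete circulant graph Cay(ℤ_n, S) of degree p^ℓ − 1 admits a perfect code if and only if p^ℓ divides n and S_0 is a pyramidal set of ℤ_n. -/

import Mathlib

open Pointwise

/-- Image of a subset `X ⊆ G` in the quotient `G ⧸ H` (denoted `X/H` in the paper). -/
def ImageSet {G : Type*} [AddCommGroup G] (H : AddSubgroup G) (X : Set G) :
    Set (G ⧸ H) :=
  (QuotientAddGroup.mk : G → G ⧸ H) '' X

/-- `X` is periodic under every element of `P` (i.e. `X + h = X` for all `h ∈ P`). -/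
def PeriodicUnder {A : Type*} [Add A] (X P : Set A) : Prop :=
  ∀ h ∈ P, (fun x => x + h) '' X = X

/-- `X` is aperiodic: its only period is `0`. -/
def APeriodic {A : Type*} [AddGroup A] (X : Set A) : Prop :=
  ∀ g : A, (fun x => x + g) '' X = X → g = 0

/-- The subgroup series `H 0 < H 1 < ⋯ < H (2t-1) ≤ H (2t) = G` is an admissible
subgroup series associated with `X`, in the sense of Definition 1.1 of the paper:
either `H 0 = ⊥` and `X` is aperiodic, or `H 0 ≠ ⊥` and `X` is `H 0`-periodic, and
conditions (T1), (T2), (T3) hold (stated directly in `G` via the canonical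
identifications of iterated quotients). -/
def IsAdmissibleSeries {G : Type*} [AddCommGroup G] (X : Set G) (t : ℕ)
    (H : ℕ → AddSubgroup G) : Prop :=
  1 ≤ t ∧
  (∀ i, i + 1 ≤ 2 * t - 1 → H i < H (i + 1)) ∧
  H (2 * t - 1) ≤ H (2 * t) ∧ H (2 * t) = ⊤ ∧
  ((H 0 = ⊥ ∧ APeriodic X) ∨ (H 0 ≠ ⊥ ∧ PeriodicUnder X ((H 0 : Set G)))) ∧
  (∀ i < t, (ImageSet (H (2 * i)) X - ImageSet (H (2 * i)) X) ∩
      ImageSet (H (2 * i)) ((H (2 * i + 1) : Set G)) = {0}) ∧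
  (∀ i, 1 ≤ i → i ≤ t →
      PeriodicUnder (ImageSet (H (2 * i - 1)) X)
        (ImageSet (H (2 * i - 1)) ((H (2 * i) : Set G)))) ∧
  (ImageSet (H (2 * t - 1)) X).ncard = Nat.card (G ⧸ H (2 * t - 1)) ∧
  (∀ i < t, (ImageSet (H (2 * i)) X).ncard = (ImageSet (H (2 * i + 1)) X).ncard)

/-- `X` is a pyramidal set of `G`. -/
def IsPyramidal {G : Type*} [AddCommGroup G] (X : Set G) : Prop :=
  0 ∈ X ∧ ∃ (t : ℕ) (H : ℕ → AddSubgroup G), IsAdmissibleSeries X t H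

/-- `D` is a perfect code in `Cay(ℤ_n, S)` iff every element of `ℤ_n` has a unique
representation `s + d` with `s ∈ S₀ = S ∪ {0}` and `d ∈ D`. -/
def IsCayleyPerfectCode {n : ℕ} (S0 D : Set (ZMod n)) : Prop :=
  ∀ g : ZMod n, ∃! sd : ZMod n × ZMod n, sd.1 ∈ S0 ∧ sd.2 ∈ D ∧ sd.1 + sd.2 = g

/-!
Being pyramidal means that `G` can be climbed by a tower of subgroups whose steps are alternately
injective on `X` and periodic for `X`. Descending such a tower builds a complement of `X`: at a
periodic step the old complement still works, and at an injective step `L ≤ M` one adds to it a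
transversal of `M/L`.

Conversely let `X ⊕ D = G` with `|X| = p ^ ℓ`, and let `χ` be a character of order `p ^ a`, the
exact power of `p` dividing `|G|`. For each `j < a` the product of the sums of `χ ^ p ^ j` over `X`
and over `D` is `0`, so one of them vanishes. A vanishing sum of roots of unity of `p`-power order
says that the set is spread evenly over the `p` cosets of `ker χ ^ p ^ j` in each coset of
`ker χ ^ p ^ (j + 1)`; in particular this step is periodic. Every even spread contributes a factor
`p` to the cardinality. Counting these factors in `|X|` and `|D|` shows that `X` is evenly spread at
exactly `ℓ` steps, which leaves no room for two elements of `X` to be separated at any other step: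
those are injective on `X`.
-/

section Periods

variable {G : Type*} [AddCommGroup G]

theorem image_add_right_eq_self_iff {X : Set G} {g : G} :
    (fun x => x + g) '' X = X ↔ g ∈ AddAction.stabilizer G X := by
  simp only [AddAction.mem_stabilizer_iff, ← Set.image_vadd, vadd_eq_add, add_comm]

theorem le_stabilizer_iff_add_subset {X : Set G} {L : AddSubgroup G} :
    L ≤ AddAction.stabilizer G X ↔ X + L ⊆ X := by
  rw [AddAction.le_stabilizer_iff_vadd_le, add_comm, ← vadd_eq_add, Set.vadd_subset_iff]
  exact forall₂_congr fun _ _ => Set.image_subset_iff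

theorem add_stabilizer_subset (X : Set G) : X + AddAction.stabilizer G X ⊆ X :=
  le_stabilizer_iff_add_subset.1 le_rfl

theorem periodicUnder_iff_le_stabilizer {X : Set G} {L : AddSubgroup G} :
    PeriodicUnder X (L : Set G) ↔ L ≤ AddAction.stabilizer G X :=
  forall₂_congr fun _ _ => image_add_right_eq_self_iff

theorem aPeriodic_iff_stabilizer_eq_bot {X : Set G} :
    APeriodic X ↔ AddAction.stabilizer G X = ⊥ := by
  simp only [APeriodic, image_add_right_eq_self_iff, AddSubgroup.eq_bot_iff_forall]

end Periods

section ImageSet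

variable {G : Type*} [AddCommGroup G]

theorem mk_eq_mk_iff_sub_mem {A : AddSubgroup G} {x y : G} :
    (x : G ⧸ A) = y ↔ x - y ∈ A := by
  rw [← sub_eq_zero, ← QuotientAddGroup.mk_sub, QuotientAddGroup.eq_zero_iff]

theorem imageSet_subset_imageSet_iff {A : AddSubgroup G} {X Y : Set G} :
    ImageSet A X ⊆ ImageSet A Y ↔ X ⊆ Y + A := by
  rw [ImageSet, Set.image_subset_iff, ImageSet, QuotientAddGroup.preimage_image_mk_eq_add]

theorem imageSet_add (A : AddSubgroup G) (X Y : Set G) :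
    ImageSet A (X + Y) = ImageSet A X + ImageSet A Y :=
  Set.image_add (QuotientAddGroup.mk' A)

end ImageSet

section Steps

variable {G : Type*} [AddCommGroup G] {X : Set G} {A B C S : AddSubgroup G}

/-- The projection `X/A → X/B` is injective. For `A ≤ B` and `0 ∈ X` this is condition (T1) at
`A < B`, written in `G` itself. -/
def IsInjectiveStep (X : Set G) (A B : AddSubgroup G) : Prop :=
  ∀ x ∈ X, ∀ y ∈ X, x - y ∈ B → x - y ∈ A

/-- The set `X/A` is `B/A`-periodic: condition (T2) at `A ≤ B`, written in `G` itself. -/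
def IsPeriodicStep (X : Set G) (A B : AddSubgroup G) : Prop :=
  X + B ⊆ X + A

theorem IsInjectiveStep.trans (hAB : IsInjectiveStep X A B) (hBC : IsInjectiveStep X B C) :
    IsInjectiveStep X A C :=
  fun x hx y hy h => hAB x hx y hy (hBC x hx y hy h)

theorem IsPeriodicStep.trans (hAB : IsPeriodicStep X A B) (hBC : IsPeriodicStep X B C) :
    IsPeriodicStep X A C :=
  Set.Subset.trans hBC hAB

theorem isPeriodicStep_bot_iff : IsPeriodicStep X ⊥ A ↔ A ≤ AddAction.stabilizer G X := by
  simp [IsPeriodicStep, le_stabilizer_iff_add_subset]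

theorem IsPeriodicStep.le_stabilizer (h : IsPeriodicStep X (AddAction.stabilizer G X) A) :
    A ≤ AddAction.stabilizer G X :=
  le_stabilizer_iff_add_subset.2 (Set.Subset.trans h (add_stabilizer_subset X))

theorem IsInjectiveStep.sup_left (hS : S ≤ AddAction.stabilizer G X)
    (h : IsInjectiveStep X A B) : IsInjectiveStep X (S ⊔ A) (S ⊔ B) := by
  intro x hx y hy hxy
  obtain ⟨s, hs, b, hb, hsb⟩ := AddSubgroup.mem_sup.1 hxy
  have hys : y + s ∈ X := le_stabilizer_iff_add_subset.1 hS (Set.add_mem_add hy hs)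
  have hb_eq : x - (y + s) = b := by rw [← sub_sub, ← hsb, add_sub_cancel_left]
  have hbA : b ∈ A := hb_eq ▸ h x hx _ hys (hb_eq ▸ hb)
  exact hsb ▸ AddSubgroup.add_mem_sup hs hbA

theorem IsPeriodicStep.sup_left (hS : S ≤ AddAction.stabilizer G X) (h : IsPeriodicStep X A B) :
    IsPeriodicStep X (S ⊔ A) (S ⊔ B) :=
  calc
    X + ↑(S ⊔ B) = X + S + B := by rw [AddSubgroup.add_normal, add_assoc]
    _ ⊆ X + B := Set.add_subset_add_right (le_stabilizer_iff_add_subset.1 hS)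
    _ ⊆ X + A := h
    _ ⊆ X + ↑(S ⊔ A) := Set.add_subset_add_left (SetLike.coe_subset_coe.2 le_sup_right)

theorem sub_inter_imageSet_eq_singleton_zero_iff (hX : X.Nonempty) (hAB : A ≤ B) :
    (ImageSet A X - ImageSet A X) ∩ ImageSet A (B : Set G) = {0} ↔ IsInjectiveStep X A B := by
  constructor
  · intro h x hx y hy hxy
    have hmem : ((x - y : G) : G ⧸ A) ∈ ({0} : Set (G ⧸ A)) :=
      h ▸ ⟨Set.sub_mem_sub (Set.mem_image_of_mem _ hx) (Set.mem_image_of_mem _ hy),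
        Set.mem_image_of_mem _ hxy⟩
    exact (QuotientAddGroup.eq_zero_iff _).1 hmem
  · intro h
    obtain ⟨x₀, hx₀⟩ := hX
    refine Set.eq_singleton_iff_unique_mem.2
      ⟨⟨⟨_, ⟨x₀, hx₀, rfl⟩, _, ⟨x₀, hx₀, rfl⟩, sub_self _⟩, 0, B.zero_mem, rfl⟩, ?_⟩
    rintro _ ⟨⟨_, ⟨x, hx, rfl⟩, _, ⟨y, hy, rfl⟩, rfl⟩, b, hb, hxy⟩
    have hbA : b - (x - y) ∈ A := mk_eq_mk_iff_sub_mem.1 hxy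
    have hxyB : x - y ∈ B := by simpa using B.sub_mem hb (hAB hbA)
    exact (QuotientAddGroup.eq_zero_iff _).2 (h x hx y hy hxyB)

theorem periodicUnder_imageSet_iff :
    PeriodicUnder (ImageSet A X) (ImageSet A (B : Set G)) ↔ IsPeriodicStep X A B := by
  have hmap : ImageSet A (B : Set G) = B.map (QuotientAddGroup.mk' A) := rfl
  rw [hmap, periodicUnder_iff_le_stabilizer, le_stabilizer_iff_add_subset, ← hmap, ← imageSet_add,
    imageSet_subset_imageSet_iff, IsPeriodicStep]

theorem IsPeriodicStep.ncard_imageSet_eq (hX : X.Nonempty) (h : IsPeriodicStep X A ⊤) :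
    (ImageSet A X).ncard = Nat.card (G ⧸ A) := by
  have huniv : (Set.univ : Set G) ⊆ X + A := by
    rwa [IsPeriodicStep, AddSubgroup.coe_top, Set.add_univ hX] at h
  rw [← Set.ncard_univ, ← Set.image_univ_of_surjective (QuotientAddGroup.mk_surjective (s := A))]
  exact congrArg Set.ncard (Set.Subset.antisymm (Set.image_mono (Set.subset_univ X))
    (imageSet_subset_imageSet_iff.2 huniv))

theorem IsInjectiveStep.ncard_imageSet_eq (hAB : A ≤ B) (h : IsInjectiveStep X A B) :
    (ImageSet A X).ncard = (ImageSet B X).ncard := by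
  let π : G ⧸ A →+ G ⧸ B := QuotientAddGroup.map A B (AddMonoidHom.id G) hAB
  have himage : ImageSet B X = π '' ImageSet A X := (Set.image_image π QuotientAddGroup.mk X).symm
  have hinj : Set.InjOn π (ImageSet A X) := by
    rintro _ ⟨x, hx, rfl⟩ _ ⟨y, hy, rfl⟩ hxy
    exact mk_eq_mk_iff_sub_mem.2 (h x hx y hy (mk_eq_mk_iff_sub_mem.1 hxy))
  rw [himage, hinj.ncard_image]

end Steps

section Towers

variable {G : Type*} [AddCommGroup G] {X : Set G} {L M : AddSubgroup G}

/-- There is a series from `L` to `G` that alternates injective and periodic steps, as in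
Definition 1.1 of the paper, beginning with an injective one. -/
inductive IsTower (X : Set G) : AddSubgroup G → Prop
  | base {L M : AddSubgroup G} (hLM : L < M) (hinj : IsInjectiveStep X L M)
      (hper : IsPeriodicStep X M ⊤) : IsTower X L
  | step {L M N : AddSubgroup G} (hLM : L < M) (hinj : IsInjectiveStep X L M) (hMN : M < N)
      (hper : IsPeriodicStep X M N) (htower : IsTower X N) : IsTower X L

/-- There is a series from `L` to `G` that alternates periodic and injective steps, beginning with
a periodic one. -/
def IsPeriodicTower (X : Set G) (L : AddSubgroup G) : Prop :=
  IsPeriodicStep X L ⊤ ∨ ∃ M, L < M ∧ IsPeriodicStep X L M ∧ IsTower X M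

theorem IsTower.of_isInjectiveStep (hLM : L ≤ M) (hinj : IsInjectiveStep X L M)
    (h : IsTower X M) : IsTower X L := by
  cases h with
  | base hMN hinj' hper => exact .base (hLM.trans_lt hMN) (hinj.trans hinj') hper
  | step hMN hinj' hNP hper htower =>
    exact .step (hLM.trans_lt hMN) (hinj.trans hinj') hNP hper htower

theorem IsPeriodicTower.isTower (hLM : L < M) (hinj : IsInjectiveStep X L M)
    (h : IsPeriodicTower X M) : IsTower X L := by
  rcases h with hper | ⟨N, hMN, hper, htower⟩
  · exact .base hLM hinj hper
  · exact .step hLM hinj hMN hper htower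

theorem IsPeriodicTower.of_isPeriodicStep (hLM : L ≤ M) (hper : IsPeriodicStep X L M)
    (h : IsPeriodicTower X M) : IsPeriodicTower X L :=
  h.imp hper.trans fun ⟨N, hMN, hper', htower⟩ => ⟨N, hLM.trans_lt hMN, hper.trans hper', htower⟩

theorem isTower_or_isPeriodicTower_of_step (hLM : L ≤ M)
    (hstep : IsInjectiveStep X L M ∨ IsPeriodicStep X L M)
    (h : IsTower X M ∨ IsPeriodicTower X M) : IsTower X L ∨ IsPeriodicTower X L := by
  rcases hLM.eq_or_lt with rfl | hlt
  · exact h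
  · rcases hstep with hinj | hper <;> rcases h with h | h
    · exact .inl (h.of_isInjectiveStep hLM hinj)
    · exact .inl (h.isTower hlt hinj)
    · exact .inr (.inr ⟨M, hlt, hper, h⟩)
    · exact .inr (h.of_isPeriodicStep hLM hper)

theorem isTower_or_isPeriodicTower_of_chain {K : ℕ → AddSubgroup G} {a : ℕ} (hK : Monotone K)
    (htop : K a = ⊤)
    (hstep : ∀ i < a, IsInjectiveStep X (K i) (K (i + 1)) ∨ IsPeriodicStep X (K i) (K (i + 1))) :
    IsTower X (K 0) ∨ IsPeriodicTower X (K 0) := by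
  refine Nat.decreasingInduction (motive := fun i _ => IsTower X (K i) ∨ IsPeriodicTower X (K i))
    (fun i hi => isTower_or_isPeriodicTower_of_step (hK i.le_succ) (hstep i hi)) ?_ (Nat.zero_le a)
  exact .inr (.inl (by rw [htop, IsPeriodicStep]))

theorem not_isPeriodicTower_stabilizer (hX : X.Nonempty) (hne : X ≠ Set.univ) :
    ¬ IsPeriodicTower X (AddAction.stabilizer G X) := by
  rintro (hper | ⟨M, hlt, hper, -⟩)
  · have hX_univ : X + (⊤ : AddSubgroup G) ⊆ X := le_stabilizer_iff_add_subset.1 hper.le_stabilizer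
    rw [AddSubgroup.coe_top, Set.add_univ hX] at hX_univ
    exact hne (Set.univ_subset_iff.1 hX_univ)
  · exact hlt.not_ge hper.le_stabilizer

-- Adding the stabilizer to every term makes the chain start at the stabilizer, where no periodic
-- step can begin.
theorem isTower_stabilizer_of_chain (hX : X.Nonempty) (hne : X ≠ Set.univ)
    {K : ℕ → AddSubgroup G} {a : ℕ} (hK : Monotone K) (htop : K a = ⊤)
    (hbot : IsInjectiveStep X ⊥ (K 0))
    (hstep : ∀ i < a, IsInjectiveStep X (K i) (K (i + 1)) ∨ IsPeriodicStep X (K i) (K (i + 1))) :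
    IsTower X (AddAction.stabilizer G X) := by
  set S := AddAction.stabilizer G X with hS
  have hinj : IsInjectiveStep X S (S ⊔ K 0) := by simpa using hbot.sup_left hS.le
  have hchain : IsTower X (S ⊔ K 0) ∨ IsPeriodicTower X (S ⊔ K 0) :=
    isTower_or_isPeriodicTower_of_chain (K := fun i => S ⊔ K i) (a := a)
      (fun _ _ hij => sup_le_sup_left (hK hij) S) (by rw [htop, sup_top_eq])
      fun i hi => (hstep i hi).imp (.sup_left hS.le) (.sup_left hS.le)
  exact (isTower_or_isPeriodicTower_of_step le_sup_left (.inl hinj) hchain).resolve_right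
    (not_isPeriodicTower_stabilizer hX hne)

/-- The subgroups `H 0 < H 1 < ⋯ < H (2t+1) ≤ H (2t+2) = G` alternate injective and periodic
steps. The paper's `t` is `t + 1` here. -/
structure IsAlternatingSeries (X : Set G) (t : ℕ) (H : ℕ → AddSubgroup G) : Prop where
  lt : ∀ i ≤ 2 * t, H i < H (i + 1)
  top : H (2 * t + 2) = ⊤
  injective : ∀ i ≤ t, IsInjectiveStep X (H (2 * i)) (H (2 * i + 1))
  periodic : ∀ i ≤ t, IsPeriodicStep X (H (2 * i + 1)) (H (2 * i + 2))

theorem IsAlternatingSeries.isTower {t : ℕ} :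
    ∀ {H : ℕ → AddSubgroup G}, IsAlternatingSeries X t H → IsTower X (H 0) := by
  induction t with
  | zero =>
    intro H h
    exact .base (h.lt 0 le_rfl) (h.injective 0 le_rfl) (h.top ▸ h.periodic 0 le_rfl)
  | succ t ih =>
    intro H h
    have hshift : IsAlternatingSeries X t fun i => H (i + 2) :=
      { lt := fun i hi => h.lt (i + 2) (by lia)
        top := h.top
        injective := fun i hi => h.injective (i + 1) (by lia)
        periodic := fun i hi => h.periodic (i + 1) (by lia) }
    exact .step (h.lt 0 (by lia)) (h.injective 0 (by lia)) (h.lt 1 (by lia))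
      (h.periodic 0 (by lia)) (ih hshift)

theorem IsTower.exists_isAlternatingSeries (h : IsTower X L) :
    ∃ t H, H 0 = L ∧ IsAlternatingSeries X t H := by
  induction h with
  | @base L M hLM hinj hper =>
    refine ⟨0, fun | 0 => L | 1 => M | _ + 2 => ⊤, rfl, ?_, rfl, ?_, ?_⟩
    · rintro i hi
      obtain rfl : i = 0 := by lia
      exact hLM
    · rintro i hi
      obtain rfl : i = 0 := by lia
      exact hinj
    · rintro i hi
      obtain rfl : i = 0 := by lia
      exact hper
  | @step L M N hLM hinj hMN hper _ ih =>
    obtain ⟨t, H, rfl, h⟩ := ih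
    refine ⟨t + 1, fun | 0 => L | 1 => M | i + 2 => H i, rfl, ?_, h.top, ?_, ?_⟩
    · rintro (_ | _ | i) hi
      · exact hLM
      · exact hMN
      · exact h.lt i (by lia)
    · rintro (_ | i) hi
      · exact hinj
      · exact h.injective i (by lia)
    · rintro (_ | i) hi
      · exact hper
      · exact h.periodic i (by lia)

theorem isAdmissibleSeries_succ_iff (hX : X.Nonempty) {t : ℕ} {H : ℕ → AddSubgroup G} :
    IsAdmissibleSeries X (t + 1) H ↔ IsAlternatingSeries X t H ∧
      ((H 0 = ⊥ ∧ AddAction.stabilizer G X = ⊥) ∨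
        (H 0 ≠ ⊥ ∧ H 0 ≤ AddAction.stabilizer G X)) := by
  rw [← aPeriodic_iff_stabilizer_eq_bot, ← periodicUnder_iff_le_stabilizer]
  constructor
  · rintro ⟨-, hlt, -, htop, hstart, hT1, hT2, -, -⟩
    have hle (i) (hi : i ≤ t) : H (2 * i) < H (2 * i + 1) := hlt _ (by lia)
    exact ⟨⟨fun i hi => hlt i (by lia), htop,
      fun i hi => (sub_inter_imageSet_eq_singleton_zero_iff hX (hle i hi).le).1 (hT1 i (by lia)),
      fun i hi => periodicUnder_imageSet_iff.1 (hT2 (i + 1) (by lia) (by lia))⟩, hstart⟩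
  · rintro ⟨h, hstart⟩
    have hle (i) (hi : i < t + 1) : H (2 * i) ≤ H (2 * i + 1) := (h.lt _ (by lia)).le
    have hlast : IsPeriodicStep X (H (2 * t + 1)) ⊤ := h.top ▸ h.periodic t le_rfl
    refine ⟨by lia, fun i hi => h.lt i (by lia), h.top ▸ le_top, h.top, hstart, ?_, ?_,
      hlast.ncard_imageSet_eq hX, fun i hi => (h.injective i (by lia)).ncard_imageSet_eq (hle i hi)⟩
    · exact fun i hi =>
        (sub_inter_imageSet_eq_singleton_zero_iff hX (hle i hi)).2 (h.injective i (by lia))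
    · rintro (_ | i) hi hit
      · lia
      · exact periodicUnder_imageSet_iff.2 (h.periodic i (by lia))

theorem isPyramidal_of_isTower_stabilizer (h0 : 0 ∈ X)
    (h : IsTower X (AddAction.stabilizer G X)) : IsPyramidal X := by
  obtain ⟨t, H, hH, hseries⟩ := h.exists_isAlternatingSeries
  refine ⟨h0, t + 1, H, (isAdmissibleSeries_succ_iff ⟨0, h0⟩).2 ⟨hseries, ?_⟩⟩
  simp only [hH, and_self, le_refl, and_true]
  exact em _

theorem IsPyramidal.exists_isTower (h : IsPyramidal X) :
    ∃ L ≤ AddAction.stabilizer G X, IsTower X L := by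
  obtain ⟨h0, _ | t, H, hH⟩ := h
  · exact absurd hH.1 (by lia)
  · obtain ⟨hseries, hstart⟩ := (isAdmissibleSeries_succ_iff ⟨0, h0⟩).1 hH
    have hle : H 0 ≤ AddAction.stabilizer G X := hstart.elim (fun h => h.1 ▸ bot_le) And.right
    exact ⟨H 0, hle, hseries.isTower⟩

end Towers

section Tilings

variable {G : Type*} [AddCommGroup G] {X T : Set G} {L M : AddSubgroup G}

/-- Modulo `L`, every element of `G` is uniquely a sum of an element of `X/L` and an element of
`T/L`, and `T` has at most one element in each coset of `L`. For `L = ⊥` this says that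
`X ⊕ T = G`. -/
structure TilesMod (X T : Set G) (L : AddSubgroup G) : Prop where
  add_eq_univ : X + T + (L : Set G) = Set.univ
  unique : ∀ x ∈ X, ∀ x' ∈ X, ∀ t ∈ T, ∀ t' ∈ T, x + t - (x' + t') ∈ L → x - x' ∈ L ∧ t = t'

theorem tilesMod_top (hX : X.Nonempty) : TilesMod X {0} ⊤ where
  add_eq_univ := by rw [Set.singleton_zero, add_zero, AddSubgroup.coe_top, Set.add_univ hX]
  unique := by
    rintro x - x' - _ rfl _ rfl -
    exact ⟨AddSubgroup.mem_top _, rfl⟩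

theorem TilesMod.of_isPeriodicStep (hLM : L ≤ M) (hper : IsPeriodicStep X L M)
    (h : TilesMod X T M) : TilesMod X T L where
  add_eq_univ := by
    rw [← Set.univ_subset_iff, ← h.add_eq_univ, add_right_comm X T M, add_right_comm X T L]
    exact Set.add_subset_add_right hper
  unique := by
    intro x hx x' hx' t ht t' ht' hxt
    obtain ⟨-, rfl⟩ := h.unique x hx x' hx' t ht t' ht' (hLM hxt)
    exact ⟨by simpa using hxt, rfl⟩

theorem exists_transversal_of_le (hLM : L ≤ M) :
    ∃ R : Set G, R + L = M ∧ ∀ r ∈ R, ∀ r' ∈ R, r - r' ∈ L → r = r' := by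
  obtain ⟨R, hR, -⟩ := L.exists_isComplement_left 0
  refine ⟨R ∩ M, Set.Subset.antisymm ?_ ?_, ?_⟩
  · rintro _ ⟨r, ⟨-, hrM⟩, l, hl, rfl⟩
    exact M.add_mem hrM (hLM hl)
  · intro g hg
    obtain ⟨r, hr, l, hl, rfl⟩ : g ∈ R + (L : Set G) := hR.add_eq ▸ Set.mem_univ g
    exact ⟨r, ⟨hr, (M.add_mem_cancel_right (hLM hl)).1 hg⟩, l, hl, rfl⟩
  · rintro r ⟨hr, -⟩ r' ⟨hr', -⟩ hrr'
    have := hR.1 (a₁ := (⟨r, hr⟩, 0)) (a₂ := (⟨r', hr'⟩, ⟨r - r', hrr'⟩)) (by simp)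
    exact congrArg (fun q => (q.1 : G)) this

theorem TilesMod.exists_of_isInjectiveStep (hLM : L ≤ M) (hinj : IsInjectiveStep X L M)
    (h : TilesMod X T M) : ∃ T', TilesMod X T' L := by
  obtain ⟨R, hRL, hR⟩ := exists_transversal_of_le hLM
  have hRM : R ⊆ M := hRL ▸ Set.subset_add_left R L.zero_mem
  refine ⟨T + R, ?_, ?_⟩
  · rw [← add_assoc, add_assoc, hRL, h.add_eq_univ]
  · rintro x hx x' hx' _ ⟨t, ht, r, hr, rfl⟩ _ ⟨t', ht', r', hr', rfl⟩ hxtr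
    have hxtrr' : x + t - (x' + t') + (r - r') ∈ L := by
      rwa [← add_sub_add_comm, add_assoc, add_assoc]
    have hrr' : r - r' ∈ M := M.sub_mem (hRM hr) (hRM hr')
    obtain ⟨hxx', rfl⟩ := h.unique x hx x' hx' t ht t' ht'
      ((M.add_mem_cancel_right hrr').1 (hLM hxtrr'))
    have hxx'L : x - x' ∈ L := hinj x hx x' hx' hxx'
    rw [add_sub_add_right_eq_sub, L.add_mem_cancel_left hxx'L] at hxtrr'
    exact ⟨hxx'L, congrArg (t + ·) (hR r hr r' hr' hxtrr')⟩

theorem IsTower.exists_tilesMod (hX : X.Nonempty) (h : IsTower X L) : ∃ T, TilesMod X T L := by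
  induction h with
  | base hLM hinj hper =>
    exact ((tilesMod_top hX).of_isPeriodicStep le_top hper).exists_of_isInjectiveStep hLM.le hinj
  | step hLM hinj hMN hper _ ih =>
    obtain ⟨T, hT⟩ := ih
    exact (hT.of_isPeriodicStep hMN.le hper).exists_of_isInjectiveStep hLM.le hinj

theorem TilesMod.isComplement (h : TilesMod X T ⊥) : AddSubgroup.IsComplement X T := by
  constructor
  · rintro ⟨⟨x, hx⟩, t, ht⟩ ⟨⟨x', hx'⟩, t', ht'⟩ hxt
    obtain ⟨hxx', rfl⟩ := h.unique x hx x' hx' t ht t' ht' (sub_eq_zero.2 hxt)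
    obtain rfl : x = x' := sub_eq_zero.1 hxx'
    rfl
  · intro g
    obtain ⟨x, hx, t, ht, hxt⟩ : g ∈ X + T := by simpa using h.add_eq_univ.ge (Set.mem_univ g)
    exact ⟨⟨⟨x, hx⟩, t, ht⟩, hxt⟩

theorem IsPyramidal.exists_isComplement (h : IsPyramidal X) :
    ∃ T, AddSubgroup.IsComplement X T := by
  obtain ⟨L, hL, htower⟩ := h.exists_isTower
  obtain ⟨T, hT⟩ := htower.exists_tilesMod ⟨0, h.1⟩
  exact ⟨T, (hT.of_isPeriodicStep bot_le (isPeriodicStep_bot_iff.2 hL)).isComplement⟩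

end Tilings

section CosetCounting

open Finset

variable {G : Type*} [AddCommGroup G] {Y : Finset G} {A B : AddSubgroup G} {p : ℕ}

open Classical in
/-- The part of `Y` in the coset `c + A`. -/
noncomputable def cosetPart (Y : Finset G) (A : AddSubgroup G) (c : G) : Finset G :=
  {y ∈ Y | y - c ∈ A}

theorem mem_cosetPart {c y : G} : y ∈ cosetPart Y A c ↔ y ∈ Y ∧ y - c ∈ A := by
  simp [cosetPart]

theorem cosetPart_top (Y : Finset G) (c : G) : cosetPart Y ⊤ c = Y := by
  simp [cosetPart]

theorem cosetPart_mono (Y : Finset G) (hAB : A ≤ B) (c : G) : cosetPart Y A c ⊆ cosetPart Y B c :=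
  fun _ hy => mem_cosetPart.2 ((mem_cosetPart.1 hy).imp_right fun h => hAB h)

theorem self_mem_cosetPart {y : G} (hy : y ∈ Y) : y ∈ cosetPart Y A y :=
  mem_cosetPart.2 ⟨hy, by simp⟩

theorem dvd_card_cosetPart_of_le {d : ℕ} (hAB : A ≤ B) (h : ∀ c, d ∣ #(cosetPart Y A c)) (c : G) :
    d ∣ #(cosetPart Y B c) := by
  classical
  rw [card_eq_sum_card_image (QuotientAddGroup.mk : G → G ⧸ A)]
  refine dvd_sum fun q hq => ?_
  obtain ⟨b, hb, rfl⟩ := mem_image.1 hq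
  have hbB : b - c ∈ B := (mem_cosetPart.1 hb).2
  have hfiber : (cosetPart Y B c).filter (fun y : G => (y : G ⧸ A) = b) = cosetPart Y A b := by
    ext y
    simp only [mem_filter, mem_cosetPart, mk_eq_mk_iff_sub_mem, and_assoc]
    refine and_congr_right fun _ => and_iff_right_of_imp fun hy => ?_
    simpa using B.add_mem (hAB hy) hbB
  rw [hfiber]
  exact h b

/-- In every coset of `B`, the set `Y` is spread evenly over the cosets of `A`, when `A` has index
`p` in `B`. -/
def IsEquidistributedStep (p : ℕ) (Y : Finset G) (A B : AddSubgroup G) : Prop :=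
  ∀ c, p * #(cosetPart Y A c) = #(cosetPart Y B c)

theorem IsEquidistributedStep.isPeriodicStep (h : IsEquidistributedStep p Y A B) :
    IsPeriodicStep (Y : Set G) A B := by
  rintro _ ⟨y, hy, b, hb, rfl⟩
  have hpos : 0 < p * #(cosetPart Y A (y + b)) := by
    rw [h]
    exact card_pos.2 ⟨y, mem_cosetPart.2 ⟨hy, by simpa using hb⟩⟩
  obtain ⟨z, hz⟩ := card_pos.1 (Nat.pos_of_mul_pos_left hpos)
  obtain ⟨hzY, hzA⟩ := mem_cosetPart.1 hz
  exact ⟨z, hzY, y + b - z, by simpa using A.neg_mem hzA, add_sub_cancel _ _⟩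

variable {K : ℕ → AddSubgroup G} {a j : ℕ}

open Classical in
/-- The steps `K i ≤ K (i + 1)` with `i < j` at which `Y` is equidistributed. -/
noncomputable def equidistributedSteps (p : ℕ) (Y : Finset G) (K : ℕ → AddSubgroup G) (j : ℕ) :
    Finset ℕ :=
  {i ∈ range j | IsEquidistributedStep p Y (K i) (K (i + 1))}

theorem mem_equidistributedSteps {i : ℕ} : i ∈ equidistributedSteps p Y K j ↔
    i < j ∧ IsEquidistributedStep p Y (K i) (K (i + 1)) := by
  simp [equidistributedSteps]

theorem card_equidistributedSteps_succ (h : IsEquidistributedStep p Y (K j) (K (j + 1))) :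
    #(equidistributedSteps p Y K (j + 1)) = #(equidistributedSteps p Y K j) + 1 := by
  simp [equidistributedSteps, range_add_one, filter_insert, h]

theorem equidistributedSteps_succ_of_not (h : ¬ IsEquidistributedStep p Y (K j) (K (j + 1))) :
    equidistributedSteps p Y K (j + 1) = equidistributedSteps p Y K j := by
  simp [equidistributedSteps, range_add_one, filter_insert, h]

theorem pow_card_equidistributedSteps_dvd (hK : Monotone K) (c : G) :
    p ^ #(equidistributedSteps p Y K j) ∣ #(cosetPart Y (K j) c) := by
  induction j generalizing c with
  | zero => simp [equidistributedSteps]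
  | succ j ih =>
    by_cases h : IsEquidistributedStep p Y (K j) (K (j + 1))
    · rw [card_equidistributedSteps_succ h, ← h c, pow_succ']
      exact mul_dvd_mul_left p (ih c)
    · rw [equidistributedSteps_succ_of_not h]
      exact dvd_card_cosetPart_of_le (hK j.le_succ) ih c

-- Passing from `K i` to `K j` multiplies the size of a coset part by at least `p` for every
-- equidistributed step in between.
theorem card_cosetPart_mul_pow_le (hK : Monotone K) {i : ℕ} (hij : i ≤ j) (c : G) :
    #(cosetPart Y (K i) c) * p ^ #(equidistributedSteps p Y K j) ≤
      #(cosetPart Y (K j) c) * p ^ #(equidistributedSteps p Y K i) := by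
  induction j, hij using Nat.le_induction with
  | base => rfl
  | succ j _ ih =>
    by_cases h : IsEquidistributedStep p Y (K j) (K (j + 1))
    · rw [card_equidistributedSteps_succ h, ← h c, pow_succ', mul_left_comm, mul_assoc]
      exact Nat.mul_le_mul_left p ih
    · rw [equidistributedSteps_succ_of_not h]
      exact ih.trans (Nat.mul_le_mul_right _ (card_le_card (cosetPart_mono Y (hK j.le_succ) c)))

theorem card_cosetPart_le_pow (hp : 0 < p) (hK : Monotone K) (htop : K a = ⊤)
    (hY : #Y ≤ p ^ #(equidistributedSteps p Y K a)) (hj : j ≤ a) (c : G) :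
    #(cosetPart Y (K j) c) ≤ p ^ #(equidistributedSteps p Y K j) := by
  have hle := card_cosetPart_mul_pow_le (Y := Y) (p := p) hK hj c
  rw [htop, cosetPart_top, mul_comm] at hle
  exact Nat.le_of_mul_le_mul_left (hle.trans (Nat.mul_le_mul_right _ hY)) (pow_pos hp _)

theorem pow_le_card_cosetPart (hK : Monotone K) {y : G} (hy : y ∈ Y) :
    p ^ #(equidistributedSteps p Y K j) ≤ #(cosetPart Y (K j) y) :=
  calc
    p ^ #(equidistributedSteps p Y K j)
      ≤ #(cosetPart Y (K 0) y) * p ^ #(equidistributedSteps p Y K j) :=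
        Nat.le_mul_of_pos_left _ (card_pos.2 ⟨y, self_mem_cosetPart hy⟩)
    _ ≤ #(cosetPart Y (K j) y) := by
        simpa [equidistributedSteps] using card_cosetPart_mul_pow_le hK (Nat.zero_le j) y

theorem isInjectiveStep_bot_of_card_le (hp : 0 < p) (hK : Monotone K) (htop : K a = ⊤)
    (hY : #Y ≤ p ^ #(equidistributedSteps p Y K a)) : IsInjectiveStep (Y : Set G) ⊥ (K 0) := by
  intro x hx y hy hxy
  have hcard : #(cosetPart Y (K 0) y) ≤ 1 := by
    simpa [equidistributedSteps] using card_cosetPart_le_pow hp hK htop hY (Nat.zero_le a) y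
  have hx_eq : x = y :=
    card_le_one.1 hcard x (mem_cosetPart.2 ⟨hx, hxy⟩) y (self_mem_cosetPart hy)
  exact sub_eq_zero.2 hx_eq

theorem isInjectiveStep_of_not_isEquidistributedStep (hp : 0 < p) (hK : Monotone K)
    (htop : K a = ⊤) (hY : #Y ≤ p ^ #(equidistributedSteps p Y K a)) (hj : j < a)
    (h : ¬ IsEquidistributedStep p Y (K j) (K (j + 1))) :
    IsInjectiveStep (Y : Set G) (K j) (K (j + 1)) := by
  intro x hx y hy hxy
  have hcard : #(cosetPart Y (K (j + 1)) y) ≤ #(cosetPart Y (K j) y) := by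
    refine (card_cosetPart_le_pow hp hK htop hY hj y).trans ?_
    rw [equidistributedSteps_succ_of_not h]
    exact pow_le_card_cosetPart hK hy
  have heq : cosetPart Y (K j) y = cosetPart Y (K (j + 1)) y :=
    eq_of_subset_of_card_le (cosetPart_mono Y (hK j.le_succ) y) hcard
  have hx_mem : x ∈ cosetPart Y (K (j + 1)) y := mem_cosetPart.2 ⟨hx, hxy⟩
  exact (mem_cosetPart.1 (heq ▸ hx_mem)).2

end CosetCounting

section RootsOfUnity

open Finset

theorem sum_range_filter_dvd {M : Type*} [AddCommMonoid M] {p : ℕ} (hp : 0 < p) (N : ℕ)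
    (f : ℕ → M) : ∑ j ∈ range (p * N) with p ∣ j, f j = ∑ i ∈ range N, f (p * i) := by
  refine (sum_nbij (p * ·) (fun i hi => ?_) (fun i _ j _ hij => Nat.eq_of_mul_eq_mul_left hp hij)
    (fun j hj => ?_) fun _ _ => rfl).symm
  · rw [mem_filter, mem_range]
    exact ⟨Nat.mul_lt_mul_of_pos_left (mem_range.1 hi) hp, dvd_mul_right p i⟩
  · obtain ⟨hlt, i, rfl⟩ := mem_filter.1 hj
    exact ⟨i, mem_coe.2 (mem_range.2 (Nat.lt_of_mul_lt_mul_left (mem_range.1 hlt))), rfl⟩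

variable {K : Type*} [CommRing K] [IsDomain K]

theorem geom_sum_eq_ite_of_pow_eq_one [DecidableEq K] {u : K} {N : ℕ} (hu : u ^ N = 1) :
    ∑ j ∈ range N, u ^ j = if u = 1 then (N : K) else 0 := by
  split_ifs with h
  · simp [h]
  · have hmul : (∑ j ∈ range N, u ^ j) * (u - 1) = 0 := by rw [geom_sum_mul, hu, sub_self]
    exact (mul_eq_zero.1 hmul).resolve_right (sub_ne_zero.2 h)

theorem sum_pow_filter_not_dvd [DecidableEq K] {u : K} {p k : ℕ} (hp : 0 < p)
    (hu : u ^ p ^ (k + 1) = 1) :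
    ∑ j ∈ range (p ^ (k + 1)) with ¬ p ∣ j, u ^ j =
      (if u = 1 then (p : K) ^ (k + 1) else 0) - if u ^ p = 1 then (p : K) ^ k else 0 := by
  have hdvd : ∑ j ∈ range (p ^ (k + 1)) with p ∣ j, u ^ j =
      if u ^ p = 1 then (p : K) ^ k else 0 := by
    rw [pow_succ'] at hu ⊢
    rw [sum_range_filter_dvd hp]
    simp only [pow_mul]
    rw [geom_sum_eq_ite_of_pow_eq_one (by rw [← pow_mul, hu]), Nat.cast_pow]
  rw [eq_sub_iff_add_eq', ← hdvd, sum_filter_add_sum_filter_not,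
    geom_sum_eq_ite_of_pow_eq_one hu, Nat.cast_pow]

variable [CharZero K] {ι : Type*} {s : Finset ι} {f : ι → K} {ζ : K}

-- The minimal polynomial of `ζ` is also that of its conjugate `ζ ^ j`.
theorem sum_pow_eq_zero_of_sum_eq_zero {N j : ℕ} [NeZero N] (hζ : IsPrimitiveRoot ζ N)
    (hf : ∀ i ∈ s, f i ^ N = 1) (hsum : ∑ i ∈ s, f i = 0) (hj : j.Coprime N) :
    ∑ i ∈ s, f i ^ j = 0 := by
  have hexp (i) : ∃ e, i ∈ s → ζ ^ e = f i := by
    by_cases hi : i ∈ s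
    · obtain ⟨e, -, he⟩ := hζ.eq_pow_of_pow_eq_one (hf i hi)
      exact ⟨e, fun _ => he⟩
    · exact ⟨0, fun h => absurd h hi⟩
  choose e he using hexp
  let P : Polynomial ℤ := ∑ i ∈ s, Polynomial.X ^ e i
  have hP : Polynomial.aeval ζ P = 0 := by simpa [P, sum_congr rfl he] using hsum
  have hdvd : minpoly ℤ (ζ ^ j) ∣ P :=
    hζ.minpoly_eq_pow_coprime hj ▸
      minpoly.isIntegrallyClosed_dvd (hζ.isIntegral (NeZero.pos N)) hP
  calc
    ∑ i ∈ s, f i ^ j = Polynomial.aeval (ζ ^ j) P := by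
      simp only [P, map_sum, map_pow, Polynomial.aeval_X]
      exact sum_congr rfl fun i hi => by rw [← he i hi, pow_right_comm]
    _ = 0 := Polynomial.aeval_eq_zero_of_dvd_aeval_eq_zero hdvd (minpoly.aeval ℤ _)

-- Sum the conjugates `∑ f i ^ j = 0` over all `j < p ^ (k + 1)` prime to `p`.
theorem mul_card_eq_one_eq_card_pow_eq_one [DecidableEq K] {p k : ℕ} (hp : p.Prime)
    (hζ : IsPrimitiveRoot ζ (p ^ (k + 1))) (hf : ∀ i ∈ s, f i ^ p ^ (k + 1) = 1)
    (hsum : ∑ i ∈ s, f i = 0) : p * #{i ∈ s | f i = 1} = #{i ∈ s | f i ^ p = 1} := by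
  have : NeZero p := ⟨hp.ne_zero⟩
  have hconj : ∑ j ∈ range (p ^ (k + 1)) with ¬ p ∣ j, ∑ i ∈ s, f i ^ j = 0 :=
    sum_eq_zero fun j hj => sum_pow_eq_zero_of_sum_eq_zero hζ hf hsum
      (((hp.coprime_iff_not_dvd.2 (mem_filter.1 hj).2).symm).pow_right _)
  rw [sum_comm, sum_congr rfl fun i hi => sum_pow_filter_not_dvd hp.pos (hf i hi),
    sum_sub_distrib, sub_eq_zero, ← sum_filter, ← sum_filter, sum_const, sum_const, nsmul_eq_mul,
    nsmul_eq_mul] at hconj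
  have hcard : p ^ k * (p * #{i ∈ s | f i = 1}) = p ^ k * #{i ∈ s | f i ^ p = 1} := by
    rw [← mul_assoc, ← pow_succ, mul_comm, mul_comm (p ^ k)]
    exact_mod_cast hconj
  exact Nat.eq_of_mul_eq_mul_left (pow_pos hp.pos k) hcard

end RootsOfUnity

section Characters

open Finset

variable {G : Type*} [AddCommGroup G] {p a j : ℕ} {χ : AddChar G ℂ} {X D : Finset G}

theorem isEquidistributedStep_ker_of_sum_eq_zero {k : ℕ} (hp : p.Prime) {ψ : AddChar G ℂ}
    (hψ : ψ ^ p ^ (k + 1) = 1) (hsum : ∑ x ∈ X, ψ x = 0) :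
    IsEquidistributedStep p X ψ.toAddMonoidHom.ker (ψ ^ p).toAddMonoidHom.ker := by
  intro c
  have hroot (x : G) : ψ x ^ p ^ (k + 1) = 1 := by rw [← AddChar.pow_apply, hψ, AddChar.one_apply]
  have hsum_shift : ∑ x ∈ X, ψ (x - c) = 0 := by
    simp only [sub_eq_add_neg, AddChar.map_add_eq_mul, ← sum_mul, hsum, zero_mul]
  exact mul_card_eq_one_eq_card_pow_eq_one hp
    (Complex.isPrimitiveRoot_exp _ (pow_ne_zero (k + 1) hp.ne_zero))
    (fun x _ => hroot (x - c)) hsum_shift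

/-- The kernel of `χ ^ p ^ j`. For fixed `χ` and `p` these kernels form a chain in `j`. -/
noncomputable def kerPow (χ : AddChar G ℂ) (p j : ℕ) : AddSubgroup G :=
  (χ ^ p ^ j).toAddMonoidHom.ker

theorem mem_kerPow {x : G} : x ∈ kerPow χ p j ↔ χ x ^ p ^ j = 1 :=
  Iff.rfl

theorem monotone_kerPow (χ : AddChar G ℂ) (p : ℕ) : Monotone (kerPow χ p) :=
  monotone_nat_of_le_succ fun j x hx => by
    rw [mem_kerPow] at hx ⊢
    rw [pow_succ, pow_mul, hx, one_pow]

theorem kerPow_eq_top (hχ : orderOf χ = p ^ a) : kerPow χ p a = ⊤ := by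
  refine (AddSubgroup.eq_top_iff' _).2 fun x => mem_kerPow.2 ?_
  rw [← hχ, ← AddChar.pow_apply, pow_orderOf_eq_one, AddChar.one_apply]

theorem isEquidistributedStep_kerPow (hp : p.Prime) (hχ : orderOf χ = p ^ a) (hj : j < a)
    (hsum : ∑ x ∈ X, (χ ^ p ^ j) x = 0) :
    IsEquidistributedStep p X (kerPow χ p j) (kerPow χ p (j + 1)) := by
  have hpow : (χ ^ p ^ j) ^ p ^ (a - (j + 1) + 1) = 1 := by
    rw [← pow_mul, ← pow_add, show j + (a - (j + 1) + 1) = a by lia, ← hχ, pow_orderOf_eq_one]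
  have hstep := isEquidistributedStep_ker_of_sum_eq_zero hp hpow hsum
  rwa [← pow_mul, ← pow_succ] at hstep

theorem sum_mul_sum_of_isComplement [Fintype G]
    (h : AddSubgroup.IsComplement (X : Set G) (D : Set G)) (ψ : AddChar G ℂ) :
    (∑ x ∈ X, ψ x) * ∑ d ∈ D, ψ d = ∑ g, ψ g := by
  rw [← sum_coe_sort X, ← sum_coe_sort D, Fintype.sum_mul_sum, ← Fintype.sum_prod_type']
  exact Fintype.sum_bijective _ h _ _ fun q => (AddChar.map_add_eq_mul ψ q.1.1 q.2.1).symm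

theorem isEquidistributedStep_or_of_isComplement [Finite G] (hp : p.Prime)
    (hχ : orderOf χ = p ^ a) (h : AddSubgroup.IsComplement (X : Set G) (D : Set G)) (hj : j < a) :
    IsEquidistributedStep p X (kerPow χ p j) (kerPow χ p (j + 1)) ∨
      IsEquidistributedStep p D (kerPow χ p j) (kerPow χ p (j + 1)) := by
  have := Fintype.ofFinite G
  have hne : χ ^ p ^ j ≠ 0 :=
    pow_ne_one_of_lt_orderOf (pow_ne_zero j hp.ne_zero)
      (hχ ▸ Nat.pow_lt_pow_right hp.one_lt hj)
  have hprod : (∑ x ∈ X, (χ ^ p ^ j) x) * ∑ d ∈ D, (χ ^ p ^ j) d = 0 := by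
    rw [sum_mul_sum_of_isComplement h, AddChar.sum_eq_zero_iff_ne_zero]
    exact hne
  exact (mul_eq_zero.1 hprod).imp (isEquidistributedStep_kerPow hp hχ hj)
    (isEquidistributedStep_kerPow hp hχ hj)

theorem le_card_equidistributedSteps_add [Finite G] (hp : p.Prime)
    (hχ : orderOf χ = p ^ a) (h : AddSubgroup.IsComplement (X : Set G) (D : Set G)) :
    a ≤ #(equidistributedSteps p X (kerPow χ p) a) +
      #(equidistributedSteps p D (kerPow χ p) a) := by
  have hcover : range a ⊆
      equidistributedSteps p X (kerPow χ p) a ∪ equidistributedSteps p D (kerPow χ p) a := by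
    intro j hj
    have hja := mem_range.1 hj
    simpa [mem_equidistributedSteps, hja] using isEquidistributedStep_or_of_isComplement hp hχ h hja
  simpa using (card_le_card hcover).trans (card_union_le _ _)

-- Since `p ^ #(equidistributed steps of D)` divides `#D`, at most `a - ℓ` steps of `D` are
-- equidistributed, and `X` has to account for the other `ℓ`.
theorem card_le_pow_card_equidistributedSteps [Finite G] (hp : p.Prime)
    (hχ : orderOf χ = p ^ (Nat.card G).factorization p) {ℓ : ℕ} (hX : #X = p ^ ℓ)
    (h : AddSubgroup.IsComplement (X : Set G) (D : Set G)) :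
    #X ≤ p ^ #(equidistributedSteps p X (kerPow χ p) ((Nat.card G).factorization p)) := by
  have hD : p ^ #(equidistributedSteps p D (kerPow χ p) ((Nat.card G).factorization p)) ∣ #D := by
    have hdvd := pow_card_equidistributedSteps_dvd (p := p) (Y := D)
      (j := (Nat.card G).factorization p) (monotone_kerPow χ p) 0
    rwa [kerPow_eq_top hχ, cosetPart_top] at hdvd
  have hcard : #X * #D = Nat.card G := by simpa using h.card_mul_card
  have hdvd := hcard ▸ mul_dvd_mul_left #X hD
  rw [hX, ← pow_add, hp.pow_dvd_iff_le_factorization Nat.card_pos.ne'] at hdvd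
  rw [hX]
  have hle := le_card_equidistributedSteps_add hp hχ h
  exact Nat.pow_le_pow_right hp.pos (by lia)

theorem isTower_stabilizer_of_isComplement [Finite G] (hp : p.Prime)
    (hχ : orderOf χ = p ^ (Nat.card G).factorization p) {ℓ : ℕ} (hcard : #X = p ^ ℓ)
    (hX : (X : Set G) ≠ Set.univ) (h : AddSubgroup.IsComplement (X : Set G) (D : Set G)) :
    IsTower (X : Set G) (AddAction.stabilizer G (X : Set G)) := by
  have hle := card_le_pow_card_equidistributedSteps hp hχ hcard h
  have hmono := monotone_kerPow χ p
  have htop := kerPow_eq_top hχ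
  refine isTower_stabilizer_of_chain h.nonempty_left hX hmono htop
    (isInjectiveStep_bot_of_card_le hp.pos hmono htop hle) fun i hi => ?_
  by_cases hstep : IsEquidistributedStep p X (kerPow χ p i) (kerPow χ p (i + 1))
  · exact .inr hstep.isPeriodicStep
  · exact .inl (isInjectiveStep_of_not_isEquidistributedStep hp.pos hmono htop hle hi hstep)

end Characters

section CyclicGroups

theorem isCayleyPerfectCode_iff_isComplement {n : ℕ} {X D : Set (ZMod n)} :
    IsCayleyPerfectCode X D ↔ AddSubgroup.IsComplement X D := by
  rw [AddSubgroup.isComplement_iff_existsUnique]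
  refine forall_congr' fun g => ⟨?_, ?_⟩
  · rintro ⟨⟨x, d⟩, ⟨hx, hd, hxd⟩, huniq⟩
    refine ⟨(⟨x, hx⟩, ⟨d, hd⟩), hxd, fun q hq => ?_⟩
    have hq_eq := Prod.ext_iff.1 (huniq (q.1, q.2) ⟨q.1.2, q.2.2, hq⟩)
    exact Prod.ext (Subtype.ext hq_eq.1) (Subtype.ext hq_eq.2)
  · rintro ⟨⟨⟨x, hx⟩, d, hd⟩, hxd, huniq⟩
    refine ⟨(x, d), ⟨hx, hd, hxd⟩, fun q ⟨hqx, hqd, hq⟩ => ?_⟩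
    exact congrArg (fun r => (r.1.1, r.2.1)) (huniq (⟨q.1, hqx⟩, ⟨q.2, hqd⟩) hq)

theorem orderOf_stdAddChar (n : ℕ) [NeZero n] :
    orderOf (ZMod.stdAddChar : AddChar (ZMod n) ℂ) = n := by
  set χ : AddChar (ZMod n) ℂ := ZMod.stdAddChar
  refine eq_of_forall_dvd fun k => ?_
  calc
    orderOf χ ∣ k ↔ χ ^ k = 1 := orderOf_dvd_iff_pow_eq_one
    _ ↔ (χ ^ k) 1 = 1 := not_iff_not.1 (AddChar.zmod_char_ne_one_iff n _)
    _ ↔ χ k = χ 0 := by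
      rw [AddChar.pow_apply, ← AddChar.map_nsmul_eq_pow, nsmul_one, AddChar.map_zero_eq_one]
    _ ↔ (k : ZMod n) = 0 := ZMod.injective_stdAddChar.eq_iff
    _ ↔ n ∣ k := CharP.cast_eq_zero_iff (ZMod n) n k

theorem exists_orderOf_addChar_eq {n d : ℕ} [NeZero n] (hd : d ∣ n) :
    ∃ χ : AddChar (ZMod n) ℂ, orderOf χ = d := by
  have hn := orderOf_stdAddChar n
  exact ⟨_, orderOf_pow_orderOf_div (by rw [hn]; exact NeZero.ne n) (by rwa [hn])⟩

end CyclicGroups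

-- A character of this order exists exactly when the Sylow `p`-subgroup of `G` is cyclic.
theorem stmt_10_general {G : Type*} [AddCommGroup G] [Finite G] {p ℓ : ℕ} (hp : p.Prime)
    {χ : AddChar G ℂ} (hχ : orderOf χ = p ^ (Nat.card G).factorization p) {X : Set G}
    (h0 : 0 ∈ X) (hcard : X.ncard = p ^ ℓ) (hX : X ≠ Set.univ) :
    (∃ D, AddSubgroup.IsComplement X D) ↔ p ^ ℓ ∣ Nat.card G ∧ IsPyramidal X := by
  constructor
  · rintro ⟨D, h⟩
    refine ⟨⟨Nat.card D, by rw [← h.card_mul_card, ← hcard, Nat.card_coe_set_eq]⟩, ?_⟩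
    lift X to Finset G using X.toFinite
    lift D to Finset G using D.toFinite
    rw [Set.ncard_coe_finset] at hcard
    exact isPyramidal_of_isTower_stabilizer h0 (isTower_stabilizer_of_isComplement hp hχ hcard hX h)
  · exact fun h => h.2.exists_isComplement

theorem stmt_10 (n p ℓ m : ℕ) (hp : p.Prime) (hl : 1 ≤ ℓ) (hm : 2 ≤ m)
    (hn : n = p ^ ℓ * m) (S : Finset (ZMod n))
    (h0 : (0 : ZMod n) ∉ S) (hsym : ∀ s ∈ S, -s ∈ S)
    (hdeg : S.card = p ^ ℓ - 1)
    (hconn : AddSubgroup.closure (S : Set (ZMod n)) = ⊤)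
    (hnoncomplete : insert (0 : ZMod n) (S : Set (ZMod n)) ≠ Set.univ) :
    (∃ D : Set (ZMod n),
        IsCayleyPerfectCode (insert (0 : ZMod n) (S : Set (ZMod n))) D) ↔
      (p ^ ℓ ∣ n ∧ IsPyramidal (insert (0 : ZMod n) (S : Set (ZMod n)))) := by
  have hcard : (insert (0 : ZMod n) (S : Set (ZMod n))).ncard = p ^ ℓ := by
    rw [Set.ncard_insert_of_notMem (by simpa using h0), Set.ncard_coe_finset, hdeg,
      Nat.sub_add_cancel (Nat.pow_pos hp.pos)]
  have : NeZero n := ⟨by rw [hn]; exact mul_ne_zero (pow_ne_zero ℓ hp.ne_zero) (by lia)⟩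
  obtain ⟨χ, hχ⟩ := exists_orderOf_addChar_eq (Nat.ordProj_dvd n p)
  have hmain := stmt_10_general hp (by rwa [Nat.card_zmod]) (Set.mem_insert 0 _) hcard hnoncomplete
  simpa only [isCayleyPerfectCode_iff_isComplement, Nat.card_zmod] using hmain
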